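/- Let the additive group ℝ^n act continuously and transitively on a nonempty locally compact Hausdorff second-countable topological space M, and suppose the stabilizer of some (equivalently, every) point is a discrete subgroup of ℝ^n of rank m. Then M is homeomorphic to ℝ^{n−m} × T^m, where T^m = (ℝ/ℤ)^m is the m-torus. -/

import Mathlib

/-!
The action of `V = ℝⁿ` on `M` is transitive, so by the open mapping theorem for actions of
σ-compact groups on Baire spaces the orbit map `V → M`, `v ↦ v +ᵥ x`, is an open quotient map;
its fibres are the cosets of the stabilizer `L` of `x`. Completing the `ℤ`-basis of `L` to a basis
of `V` and reducing the coordinates along `L` modulo `1` is another open quotient map, from `V` to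
`ℝⁿ⁻ᵐ × Tᵐ`, with kernel `L`. Two quotient maps out of `V` with the same fibres have homeomorphic
targets.
-/

open Module Topology

theorem nonempty_homeomorph_of_isQuotientMap {X Y Z : Type*} [TopologicalSpace X]
    [TopologicalSpace Y] [TopologicalSpace Z] {f : X → Y} {g : X → Z} (hf : IsQuotientMap f)
    (hg : IsQuotientMap g) (hfg : ∀ a b, f a = f b ↔ g a = g b) : Nonempty (Y ≃ₜ Z) := by
  let F : C(X, Y) := ⟨f, hf.continuous⟩
  let G : C(X, Z) := ⟨g, hg.continuous⟩
  have ker_eq : Setoid.ker F = Setoid.ker G := Setoid.ext hfg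
  have eY : Quotient (Setoid.ker F) ≃ₜ Y := IsQuotientMap.homeomorph (f := F) hf
  have eZ : Quotient (Setoid.ker G) ≃ₜ Z := IsQuotientMap.homeomorph (f := G) hg
  rw [ker_eq] at eY
  exact ⟨eY.symm.trans eZ⟩

section TransitiveActions

variable {G X : Type*} [AddGroup G] [AddAction G X]

theorem vadd_eq_vadd_iff_neg_add_mem_stabilizer {g h : G} {x : X} :
    g +ᵥ x = h +ᵥ x ↔ -h + g ∈ AddAction.stabilizer G x := by
  rw [AddAction.mem_stabilizer_iff, add_vadd, neg_vadd_eq_iff]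

variable [TopologicalSpace G] [IsTopologicalAddGroup G] [SigmaCompactSpace G]
  [TopologicalSpace X] [T2Space X] [BaireSpace X] [ContinuousVAdd G X]
  [AddAction.IsPretransitive G X]

theorem isOpenQuotientMap_vadd_of_sigmaCompact (x : X) :
    IsOpenQuotientMap fun g : G => g +ᵥ x where
  surjective := AddAction.exists_vadd_eq G x
  continuous := by fun_prop
  isOpenMap := isOpenMap_vadd_of_sigmaCompact x

theorem nonempty_homeomorph_of_ker_eq_stabilizer {H : Type*} [AddGroup H] [TopologicalSpace H]
    {φ : G →+ H} (hφ : IsQuotientMap φ) {x : X} (hker : φ.ker = AddAction.stabilizer G x) :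
    Nonempty (X ≃ₜ H) :=
  nonempty_homeomorph_of_isQuotientMap
    (isOpenQuotientMap_vadd_of_sigmaCompact x).isQuotientMap hφ fun g h => by
      rw [vadd_eq_vadd_iff_neg_add_mem_stabilizer, ← hker, AddMonoidHom.eq_iff]

end TransitiveActions

section BasisExtension

variable {K V κ ι : Type*} [DivisionRing K] [AddCommGroup V] [Module K V] {b : ι → V}

theorem sumExtend_comp_inl (hb : LinearIndependent K b) : Basis.sumExtend hb ∘ Sum.inl = b := by
  funext i
  simp only [Basis.sumExtend, Function.comp_apply, Basis.reindex_apply, Basis.extend_apply_self]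
  rfl

theorem exists_basis_sum_comp_inr_eq [FiniteDimensional K V] [Finite κ]
    (hκ : Nat.card κ + Nat.card ι = finrank K V) (hb : LinearIndependent K b) :
    ∃ B : Basis (κ ⊕ ι) K V, B ∘ Sum.inr = b := by
  let B := Basis.sumExtend hb
  have : Finite (ι ⊕ Basis.sumExtendIndex hb) := Module.Finite.finite_basis B
  have : Finite ι := .sum_left (Basis.sumExtendIndex hb)
  have : Finite (Basis.sumExtendIndex hb) := .sum_right ι
  have card_eq : Nat.card (Basis.sumExtendIndex hb) = Nat.card κ := by
    have hB := finrank_eq_nat_card_basis B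
    rw [Nat.card_sum] at hB
    omega
  obtain ⟨e⟩ : Nonempty (Basis.sumExtendIndex hb ≃ κ) := Finite.card_eq.1 card_eq
  refine ⟨B.reindex ((Equiv.sumComm _ _).trans (e.sumCongr (.refl ι))), funext fun i => ?_⟩
  simpa [B] using congrFun (sumExtend_comp_inl hb) i

end BasisExtension

theorem mem_span_int_range_iff_exists_sum {R V ι : Type*} [Ring R] [AddCommGroup V] [Module R V]
    [Fintype ι] {b : ι → V} {v : V} :
    v ∈ Submodule.span ℤ (Set.range b) ↔ ∃ c : ι → ℤ, v = ∑ i, (c i : R) • b i := by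
  simp only [Submodule.mem_span_range_iff_exists_fun, Int.cast_smul_eq_zsmul, eq_comm]

section Cylinder

variable {V κ ι : Type*} [AddCommGroup V] [Module ℝ V]

/-- The projection of a real vector space onto the cylinder `ℝ^κ × T^ι` attached to a basis indexed
by `κ ⊕ ι`: the coordinates in `κ` are kept, those in `ι` are reduced modulo `1`. -/
noncomputable def cylinderProjection (B : Basis (κ ⊕ ι) ℝ V) :
    V →+ (κ → ℝ) × (ι → AddCircle (1 : ℝ)) where
  toFun v := (fun k => B.repr v (.inl k), fun i => (B.repr v (.inr i) : AddCircle (1 : ℝ)))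
  map_zero' := by ext <;> simp
  map_add' v w := by ext <;> simp

theorem mem_ker_cylinderProjection {B : Basis (κ ⊕ ι) ℝ V} {v : V} :
    v ∈ (cylinderProjection B).ker ↔
      (∀ k, B.repr v (.inl k) = 0) ∧ ∀ i, ∃ z : ℤ, (z : ℝ) = B.repr v (.inr i) := by
  simp [cylinderProjection, AddMonoidHom.mem_ker, funext_iff, AddSubgroup.mem_zmultiples_iff]

theorem ker_cylinderProjection (B : Basis (κ ⊕ ι) ℝ V) :
    (cylinderProjection B).ker = (Submodule.span ℤ (Set.range (B ∘ Sum.inr))).toAddSubgroup := by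
  apply le_antisymm
  · intro v hv
    obtain ⟨h_free, h_int⟩ := mem_ker_cylinderProjection.1 hv
    rw [Submodule.mem_toAddSubgroup, ← B.linearCombination_repr v,
      Finsupp.linearCombination_apply]
    refine Submodule.sum_mem _ fun j _ => ?_
    rcases j with k | i
    · simp [h_free k]
    · obtain ⟨z, hz⟩ := h_int i
      change B.repr v (.inr i) • B (.inr i) ∈ _
      rw [← hz, Int.cast_smul_eq_zsmul]
      exact Submodule.smul_mem _ z (Submodule.subset_span ⟨i, rfl⟩)
  · suffices Submodule.span ℤ (Set.range (B ∘ Sum.inr)) ≤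
        AddSubgroup.toIntSubmodule (cylinderProjection B).ker from this
    rw [Submodule.span_le]
    rintro _ ⟨i, rfl⟩
    classical
    refine mem_ker_cylinderProjection.2 ⟨fun k => by simp, fun j => ⟨if i = j then 1 else 0, ?_⟩⟩
    simp [Finsupp.single_apply]

variable [TopologicalSpace V] [IsTopologicalAddGroup V] [ContinuousSMul ℝ V] [T2Space V]

theorem isOpenQuotientMap_cylinderProjection [Finite κ] [Finite ι] (B : Basis (κ ⊕ ι) ℝ V) :
    IsOpenQuotientMap (cylinderProjection B) := by
  have : Fintype κ := Fintype.ofFinite κ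
  have : Fintype ι := Fintype.ofFinite ι
  let coordinates : V ≃ₜ (κ → ℝ) × (ι → ℝ) :=
    B.equivFunL.toHomeomorph.trans (Homeomorph.sumPiEquivProdPi κ ι fun _ => ℝ)
  have reduction : IsOpenQuotientMap (Prod.map id (Pi.map fun _ => (↑)) :
      (κ → ℝ) × (ι → ℝ) → (κ → ℝ) × (ι → AddCircle (1 : ℝ))) :=
    .prodMap .id (.piMap fun _ => QuotientAddGroup.isOpenQuotientMap_mk)
  exact reduction.comp coordinates.isOpenQuotientMap

theorem homogeneous_space_of_real_action_homeomorph_cylinder_general [FiniteDimensional ℝ V]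
    [Finite κ] (hκ : Nat.card κ + Nat.card ι = finrank ℝ V)
    {M : Type*} [TopologicalSpace M] [T2Space M] [BaireSpace M] [AddAction V M]
    [ContinuousVAdd V M] [AddAction.IsPretransitive V M] {x : M} {b : ι → V}
    (hb : LinearIndependent ℝ b)
    (hstab : AddAction.stabilizer V x = (Submodule.span ℤ (Set.range b)).toAddSubgroup) :
    Nonempty (M ≃ₜ (κ → ℝ) × (ι → AddCircle (1 : ℝ))) := by
  have : Finite ι := hb.finite
  have : SigmaCompactSpace V :=
    (ContinuousLinearEquiv.ofFinrankEq (finrank_fin_fun ℝ).symm :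
      V ≃L[ℝ] (Fin (finrank ℝ V) → ℝ)).toHomeomorph.isClosedEmbedding.sigmaCompactSpace
  obtain ⟨B, rfl⟩ := exists_basis_sum_comp_inr_eq hκ hb
  exact nonempty_homeomorph_of_ker_eq_stabilizer
    (isOpenQuotientMap_cylinderProjection B).isQuotientMap
    ((ker_cylinderProjection B).trans hstab.symm)

end Cylinder

/-- If `ℝ^n` acts continuously and transitively on a nonempty locally compact Hausdorff
second-countable space `M` and the stabilizer of a point is a discrete subgroup of rank
`m` (generated over `ℤ` by `m` vectors that are `ℝ`-linearly independent), then `M` is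
homeomorphic to `ℝ^{n-m} × T^m`. -/
theorem homogeneous_space_of_real_action_homeomorph_cylinder (n m : ℕ) (hm : m ≤ n)
    (M : Type)
    [TopologicalSpace M] [T2Space M] [LocallyCompactSpace M] [SecondCountableTopology M]
    [Nonempty M] [AddAction (Fin n → ℝ) M]
    (hcont : Continuous fun p : (Fin n → ℝ) × M => p.1 +ᵥ p.2)
    (htrans : ∀ y z : M, ∃ g : Fin n → ℝ, g +ᵥ y = z) (x : M)
    (hdisc : DiscreteTopology (AddAction.stabilizer (Fin n → ℝ) x))
    (hrank : ∃ b : Fin m → (Fin n → ℝ),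
      LinearIndependent ℝ b ∧
      ∀ v : Fin n → ℝ, v ∈ AddAction.stabilizer (Fin n → ℝ) x ↔
        ∃ c : Fin m → ℤ, v = ∑ i : Fin m, (c i : ℝ) • b i) :
    Nonempty (M ≃ₜ ((Fin (n - m) → ℝ) × (Fin m → AddCircle (1 : ℝ)))) := by
  obtain ⟨b, hb, hstab⟩ := hrank
  have : ContinuousVAdd (Fin n → ℝ) M := ⟨hcont⟩
  have : AddAction.IsPretransitive (Fin n → ℝ) M := ⟨htrans⟩
  have stabilizer_eq_span : AddAction.stabilizer (Fin n → ℝ) x =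
      (Submodule.span ℤ (Set.range b)).toAddSubgroup :=
    AddSubgroup.ext fun v => (hstab v).trans mem_span_int_range_iff_exists_sum.symm
  exact homogeneous_space_of_real_action_homeomorph_cylinder_general (by simp [hm]) hb
    stabilizer_eq_span
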